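/- Let A₁, A₂, A₃ be hermitian 4×4 complex matrices whose joint numerical range W = W(A₁,A₂,A₃) has dimension 3. Suppose F is a non-elliptic face of W, G is a rank-3 face of W, and F ≠ G. Then G is two-dimensional, F ∩ G is a one-dimensional face of F and a one-dimensional face of G, and F ∩ G is an exposed face of W. -/

import Mathlib

open Matrix ComplexOrder

noncomputable section

/-- A density matrix: positive semidefinite with unit trace. -/
def IsDensity {n : Type*} [Fintype n] (ρ : Matrix n n ℂ) : Prop :=
  ρ.PosSemidef ∧ ρ.trace = 1

/-- The measurement map `ρ ↦ (tr ρA₁, …, tr ρA_k)` (the traces are real for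
hermitian matrices). -/
def wpt {n : Type*} [Fintype n] {k : ℕ} (A : Fin k → Matrix n n ℂ)
    (ρ : Matrix n n ℂ) : Fin k → ℝ :=
  fun i => ((ρ * A i).trace).re

/-- The joint numerical range of `k` matrices. -/
def JNR {n : Type*} [Fintype n] {k : ℕ} (A : Fin k → Matrix n n ℂ) :
    Set (Fin k → ℝ) :=
  wpt A '' {ρ | IsDensity ρ}

/-- `F` is a face of the convex set `C`: a convex subset such that whenever an
open segment between two points of `C` meets `F`, both endpoints lie in `F`. -/
def IsFaceOf {E : Type*} [AddCommGroup E] [Module ℝ E] (C F : Set E) : Prop :=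
  Convex ℝ F ∧ IsExtreme ℝ C F

/-- The dimension of a convex set: the dimension of its affine hull. -/
def convDim {E : Type*} [AddCommGroup E] [Module ℝ E] (F : Set E) : ℕ :=
  Module.finrank ℝ (affineSpan ℝ F).direction

/-- Euclidean dot product on `Fin d → ℝ`. -/
def dotR {d : ℕ} (u v : Fin d → ℝ) : ℝ := ∑ i, u i * v i

/-- `F` is an exposed face of `C`: the set of minimizers of a linear functional. -/
def IsExposedFace {d : ℕ} (C F : Set (Fin d → ℝ)) : Prop :=
  ∃ u : Fin d → ℝ, F = {x ∈ C | ∀ y ∈ C, dotR u x ≤ dotR u y}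

/-- The normal cone of `C` at `p`. -/
def normalConeAt {d : ℕ} (C : Set (Fin d → ℝ)) (p : Fin d → ℝ) :
    Set (Fin d → ℝ) :=
  {u | ∀ y ∈ C, 0 ≤ dotR (y - p) u}

/-- `p` is a corner point of `C` if the normal cone of `C` at `p` spans `ℝ^d`. -/
def IsCornerPoint {d : ℕ} (C : Set (Fin d → ℝ)) (p : Fin d → ℝ) : Prop :=
  p ∈ C ∧ Submodule.span ℝ (normalConeAt C p) = ⊤

/-- The closed unit disk of `ℝ²`. -/
def unitDisk2 : Set (Fin 2 → ℝ) := {v | v 0 ^ 2 + v 1 ^ 2 ≤ 1}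

/-- An elliptic disk in `ℝ³`: the image of the closed unit disk of `ℝ²` under an
injective affine map. -/
def IsEllipticDisk (F : Set (Fin 3 → ℝ)) : Prop :=
  ∃ f : (Fin 2 → ℝ) →ᵃ[ℝ] (Fin 3 → ℝ), Function.Injective f ∧ F = f '' unitDisk2

/-- A non-elliptic face of `W`: a two-dimensional face that is not an elliptic
disk. -/
def IsNonEllipticFace (W F : Set (Fin 3 → ℝ)) : Prop :=
  IsFaceOf W F ∧ convDim F = 2 ∧ ¬ IsEllipticDisk F

/-- A rank-3 face of the joint numerical range of `A`. -/
def IsRank3Face {k : ℕ} (A : Fin k → Matrix (Fin 4) (Fin 4) ℂ)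
    (F : Set (Fin k → ℝ)) : Prop :=
  F.Nonempty ∧ IsFaceOf (JNR A) F ∧
    ∃ P : Matrix (Fin 4) (Fin 4) ℂ, Pᴴ = P ∧ P * P = P ∧ P.rank = 3 ∧
      ∀ ρ : Matrix (Fin 4) (Fin 4) ℂ, IsDensity ρ → (wpt A ρ ∈ F ↔ P * ρ * P = ρ)

/-!
A supporting functional `u ⬝ᵥ x ≥ c` of the joint numerical range `W` makes the pencil
`∑ uᵢAᵢ - c` positive semidefinite, and the density matrices on the corresponding exposed face are
those supported on its kernel. So this face is the joint numerical range of the compressions of the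
`Aᵢ` to the kernel. On a two-dimensional kernel it is an affine image of the Bloch ball, hence an
elliptic disk as soon as it is two-dimensional. A non-elliptic face `F` therefore has a kernel `K`
of dimension three, and so does the rank-3 face `G`; if `F ≠ G`, the two kernels meet in a plane
`L ⊆ ℂ⁴`, which makes `F ∩ G` a nonempty exposed face.

The heart of the matter is that `F ∩ G` is not a single point `p`. Otherwise every `Aᵢ` compresses
to the scalar `pᵢ` on `L`. Let `e ∈ K` be a unit vector orthogonal to `L`. The two pencils impose
two independent linear conditions on the vectors `(⟨e, Aᵢx⟩)ᵢ`, `x ∈ L`, which leaves only a line in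
`ℂ³`. Hence some unit vector `y ∈ L` satisfies `⟨e, Aᵢy⟩ = 0` for all `i`. The scalar block of `y`
decouples and contributes only the point `p`, so that `F` is already the joint numerical range of
`2 × 2` matrices, contradicting that it is not an elliptic disk.
-/

section Faces

variable {E : Type*} [AddCommGroup E] [Module ℝ E] {C F G : Set E}

theorem IsFaceOf.inter (hF : IsFaceOf C F) (hG : IsFaceOf C G) : IsFaceOf C (F ∩ G) :=
  ⟨hF.1.inter hG.1, hF.2.inter hG.2⟩

theorem IsFaceOf.mono (hF : IsFaceOf C F) (hFG : F ⊆ G) (hG : G ⊆ C) : IsFaceOf G F :=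
  ⟨hF.1, hF.2.mono hG hFG⟩

theorem convDim_eq_zero_iff_subsingleton [FiniteDimensional ℝ E] :
    convDim F = 0 ↔ F.Subsingleton := by
  rw [convDim, Submodule.finrank_eq_zero, direction_affineSpan,
    vectorSpan_eq_bot_iff_subsingleton]

end Faces

section IntrinsicInterior

variable {E : Type*} [NormedAddCommGroup E] [NormedSpace ℝ E] {C F : Set E} {x y : E}

theorem exists_mem_openSegment_of_mem_intrinsicInterior (hx : x ∈ intrinsicInterior ℝ C)
    (hy : y ∈ affineSpan ℝ C) : ∃ z ∈ C, x ∈ openSegment ℝ y z := by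
  obtain ⟨x, hxC, rfl⟩ := mem_intrinsicInterior.1 hx
  let line : ℝ → affineSpan ℝ C := fun t =>
    ⟨AffineMap.lineMap y (x : E) t, AffineMap.lineMap_mem t hy x.2⟩
  have hline : Continuous line := AffineMap.lineMap_continuous.subtype_mk _
  have hone : line 1 = x := by simp [line]
  have hmem : ∀ᶠ t in nhdsWithin (1 : ℝ) (Set.Ioi 1), (line t : E) ∈ C :=
    nhdsWithin_le_nhds (hline.tendsto' 1 x hone (mem_interior_iff_mem_nhds.1 hxC))
  obtain ⟨t, htC, ht : 1 < t⟩ := (hmem.and self_mem_nhdsWithin).exists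
  have ht0 : 0 < t := one_pos.trans ht
  refine ⟨line t, htC, 1 - t⁻¹, t⁻¹, sub_pos.2 (inv_lt_one_of_one_lt₀ ht), inv_pos.2 ht0,
    sub_add_cancel _ _, ?_⟩
  simp only [line, AffineMap.lineMap_apply_module, smul_add, smul_smul, mul_sub, mul_one,
    inv_mul_cancel₀ ht0.ne', one_smul, ← add_assoc, ← add_smul]
  simp

theorem IsFaceOf.eq_of_mem_intrinsicInterior (hF : IsFaceOf C F) (hxF : x ∈ F)
    (hxC : x ∈ intrinsicInterior ℝ C) : F = C := by
  refine hF.2.subset.antisymm fun y hy => ?_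
  obtain ⟨z, hz, hxyz⟩ := exists_mem_openSegment_of_mem_intrinsicInterior hxC
    (subset_affineSpan ℝ C hy)
  exact hF.2.left_mem_of_mem_openSegment hy hz hxF hxyz

variable [FiniteDimensional ℝ E]

theorem IsFaceOf.eq_of_subset_affineSpan (hF : IsFaceOf C F) (hne : F.Nonempty)
    (hC : C ⊆ affineSpan ℝ F) : F = C := by
  refine hF.2.subset.antisymm fun y hy => ?_
  obtain ⟨x, hx⟩ := hne.intrinsicInterior hF.1
  obtain ⟨z, hz, hxyz⟩ := exists_mem_openSegment_of_mem_intrinsicInterior hx (hC hy)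
  exact hF.2.left_mem_of_mem_openSegment hy (hF.2.subset hz) (intrinsicInterior_subset hx) hxyz

theorem IsFaceOf.convDim_lt (hF : IsFaceOf C F) (hne : F.Nonempty) (hFC : F ≠ C) :
    convDim F < convDim C := by
  have hle : affineSpan ℝ F ≤ affineSpan ℝ C := affineSpan_mono ℝ hF.2.subset
  refine Submodule.finrank_lt_finrank_of_lt <|
    AffineSubspace.direction_lt_of_nonempty (hle.lt_of_ne fun heq => hFC ?_)
      ((affineSpan_nonempty ℝ).2 hne)
  exact hF.eq_of_subset_affineSpan hne (heq ▸ subset_affineSpan ℝ C)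

end IntrinsicInterior

section ExposedFaces

variable {d : ℕ} {C F G : Set (Fin d → ℝ)} {u v : Fin d → ℝ} {c c' : ℝ}

/-- `F` is the part of `C` on the hyperplane `u ⬝ᵥ x = c`, and this hyperplane leaves `C` on its
nonnegative side. In contrast to `IsExposedFace`, the level `c` is recorded and `F` may be empty. -/
structure IsExposedBy (C F : Set (Fin d → ℝ)) (u : Fin d → ℝ) (c : ℝ) : Prop where
  le : ∀ x ∈ C, c ≤ u ⬝ᵥ x
  eq : F = {x ∈ C | u ⬝ᵥ x = c}

namespace IsExposedBy

theorem mem_iff (hF : IsExposedBy C F u c) {x : Fin d → ℝ} : x ∈ F ↔ x ∈ C ∧ u ⬝ᵥ x = c :=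
  Set.ext_iff.1 hF.eq x

theorem subset (hF : IsExposedBy C F u c) : F ⊆ C :=
  fun _ hx => (hF.mem_iff.1 hx).1

theorem convex (hC : Convex ℝ C) (hF : IsExposedBy C F u c) : Convex ℝ F := by
  rw [hF.eq]
  exact hC.inter (convex_hyperplane (dotProductBilin ℝ ℝ u).isLinear c)

theorem isFaceOf (hC : Convex ℝ C) (hF : IsExposedBy C F u c) : IsFaceOf C F := by
  refine ⟨hF.convex hC, hF.subset, fun x hx y hy z hz ⟨a, b, ha, hb, hab, hxyz⟩ => ?_⟩
  have hxc := hF.le x hx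
  have hyc := hF.le y hy
  have hzc : a * (u ⬝ᵥ x) + b * (u ⬝ᵥ y) = c := by
    rw [← (hF.mem_iff.1 hz).2, ← hxyz, dotProduct_add, dotProduct_smul, dotProduct_smul,
      smul_eq_mul, smul_eq_mul]
  refine hF.mem_iff.2 ⟨hx, hxc.antisymm' (le_of_mul_le_mul_left ?_ ha)⟩
  have hcomb : a * c + b * c = c := by rw [← add_mul, hab, one_mul]
  linarith [mul_le_mul_of_nonneg_left hyc hb.le]

theorem inter (hF : IsExposedBy C F u c) (hG : IsExposedBy C G v c') :
    IsExposedBy C (F ∩ G) (u + v) (c + c') where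
  le x hx := by
    rw [add_dotProduct]
    exact add_le_add (hF.le x hx) (hG.le x hx)
  eq := by
    ext x
    simp only [Set.mem_inter_iff, hF.mem_iff, hG.mem_iff, Set.mem_ofPred_eq, add_dotProduct]
    constructor
    · rintro ⟨⟨hx, hu⟩, -, hv⟩
      exact ⟨hx, by rw [hu, hv]⟩
    · rintro ⟨hx, huv⟩
      have hu := hF.le x hx
      have hv := hG.le x hx
      exact ⟨⟨hx, by linarith⟩, hx, by linarith⟩

theorem isExposedFace (hF : IsExposedBy C F u c) (hne : F.Nonempty) : IsExposedFace C F := by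
  obtain ⟨x₀, hx₀⟩ := hne
  obtain ⟨hx₀C, hx₀c⟩ := hF.mem_iff.1 hx₀
  refine ⟨u, Set.ext fun x => hF.mem_iff.trans <| and_congr_right fun hx => ?_⟩
  change u ⬝ᵥ x = c ↔ ∀ y ∈ C, u ⬝ᵥ x ≤ u ⬝ᵥ y
  exact ⟨fun hxc y hy => hxc ▸ hF.le y hy,
    fun hmin => ((hmin x₀ hx₀C).trans_eq hx₀c).antisymm (hF.le x hx)⟩

theorem linearIndependent_pair (hF : IsExposedBy C F u c) (hG : IsExposedBy C G v c')
    (hne : (F ∩ G).Nonempty) (hFG : ¬F ⊆ G) (hGF : ¬G ⊆ F) :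
    LinearIndependent ℝ ![u, v] := by
  obtain ⟨p, hpF, hpG⟩ := hne
  obtain ⟨x, hxF, hxG⟩ := Set.not_subset.1 hFG
  obtain ⟨y, hyG, hyF⟩ := Set.not_subset.1 hGF
  have hpu := (hF.mem_iff.1 hpF).2
  have hpv := (hG.mem_iff.1 hpG).2
  have hxv : v ⬝ᵥ x - c' ≠ 0 :=
    fun h => hxG (hG.mem_iff.2 ⟨hF.subset hxF, sub_eq_zero.1 h⟩)
  have hyu : u ⬝ᵥ y - c ≠ 0 :=
    fun h => hyF (hF.mem_iff.2 ⟨hG.subset hyG, sub_eq_zero.1 h⟩)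
  refine LinearIndependent.pair_iff.2 fun a b hab => ?_
  have hdot (z : Fin d → ℝ) : a * (u ⬝ᵥ z - c) + b * (v ⬝ᵥ z - c') = 0 := by
    rw [← hpu, ← hpv, ← dotProduct_sub, ← dotProduct_sub, ← smul_eq_mul, ← smul_eq_mul,
      ← smul_dotProduct, ← smul_dotProduct, ← add_dotProduct, hab, zero_dotProduct]
  refine ⟨(mul_eq_zero.1 ?_).resolve_right hyu, (mul_eq_zero.1 ?_).resolve_right hxv⟩
  · simpa only [(hG.mem_iff.1 hyG).2, sub_self, mul_zero, add_zero] using hdot y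
  · simpa only [(hF.mem_iff.1 hxF).2, sub_self, mul_zero, zero_add] using hdot x

end IsExposedBy

theorem interior_nonempty_of_convDim_eq (hC : Convex ℝ C) (hne : C.Nonempty)
    (hdim : convDim C = d) : (interior C).Nonempty := by
  refine hC.interior_nonempty_iff_affineSpan_eq_top.2 ?_
  rw [← AffineSubspace.direction_eq_top_iff_of_nonempty ((affineSpan_nonempty ℝ).2 hne)]
  exact Submodule.eq_top_of_finrank_eq (hdim.trans (Module.finrank_fin_fun ℝ).symm)

theorem exists_isExposedBy_of_isFaceOf (hC : Convex ℝ C) (hdim : convDim C = d)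
    (hF : IsFaceOf C F) (hne : F.Nonempty) (hFC : F ≠ C) :
    ∃ u c E, IsExposedBy C E u c ∧ F ⊆ E ∧ E ≠ C := by
  have hint : (interior C).Nonempty :=
    interior_nonempty_of_convDim_eq hC (hne.mono hF.2.subset) hdim
  have hdisj : Disjoint (interior C) F := Set.disjoint_right.2 fun x hxF hxC =>
    hFC (hF.eq_of_mem_intrinsicInterior hxF (interior_subset_intrinsicInterior hxC))
  obtain ⟨f, c, hf, hfC, hfF⟩ :=
    geometric_hahn_banach_of_nonempty_interior hC hF.1 hdisj hint hne
  set u := (dotProductEquiv ℝ (Fin d)).symm (-f.toLinearMap) with hu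
  have hdot (x : Fin d → ℝ) : u ⬝ᵥ x = -f x := by
    rw [← dotProductEquiv_apply_apply, hu, LinearEquiv.apply_symm_apply]
    rfl
  have hE : IsExposedBy C {x ∈ C | u ⬝ᵥ x = -c} u (-c) :=
    ⟨fun x hx => hdot x ▸ neg_le_neg (hfC x hx), rfl⟩
  refine ⟨u, -c, _, hE, fun x hx => ⟨hF.2.subset hx, ?_⟩, fun hEC => hf ?_⟩
  · rw [hdot, (hfC x (hF.2.subset hx)).antisymm (hfF x hx)]
  · obtain ⟨x, hx⟩ := hint
    have hxE : x ∈ {x ∈ C | u ⬝ᵥ x = -c} := hEC.ge (interior_subset hx)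
    have hfx : f x = c := neg_injective (hdot x ▸ hxE.2)
    have hmax : IsLocalMax f x := Filter.mem_of_superset (mem_interior_iff_mem_nhds.1 hx)
      fun y hy => (hfC y hy).trans_eq hfx.symm
    exact hmax.hasFDerivAt_eq_zero f.hasFDerivAt

theorem IsFaceOf.exists_isExposedBy_of_convDim_add_one (hC : Convex ℝ C) (hdim : convDim C = d)
    (hF : IsFaceOf C F) (hne : F.Nonempty) (hFd : convDim F + 1 = d) :
    ∃ u c, IsExposedBy C F u c := by
  obtain ⟨u, c, E, hE, hFE, hEC⟩ := exists_isExposedBy_of_isFaceOf hC hdim hF hne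
    (by rintro rfl; lia)
  have hEd : convDim E < d := ((hE.isFaceOf hC).convDim_lt (hne.mono hFE) hEC).trans_eq hdim
  by_cases hFeqE : F = E
  · exact ⟨u, c, hFeqE ▸ hE⟩
  · have := (hF.mono hFE hE.subset).convDim_lt hne hFeqE
    lia

end ExposedFaces

section EllipticDisks

open Metric

variable {V W : Type*} [NormedAddCommGroup V] [InnerProductSpace ℝ V] [AddCommGroup W] [Module ℝ W]

theorem convDim_image_closedBall (f : V →ᵃ[ℝ] W) :
    convDim (f '' closedBall 0 1) = Module.finrank ℝ f.linear.range := by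
  have hball : affineSpan ℝ (closedBall (0 : V) 1) = ⊤ := by
    refine affineSpan_eq_top_of_nonempty_interior ⟨0, ?_⟩
    rw [(convex_closedBall (0 : V) 1).convexHull_eq]
    exact ball_subset_interior_closedBall (mem_ball_self one_pos)
  rw [convDim, ← AffineSubspace.map_span, hball, AffineSubspace.map_direction,
    AffineSubspace.direction_top, Submodule.map_top]

variable [FiniteDimensional ℝ V]

theorem image_closedBall_orthogonal_ker (f : V →ᵃ[ℝ] W) :
    (fun x : f.linear.kerᗮ => f x) '' closedBall 0 1 = f '' closedBall 0 1 := by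
  refine Set.Subset.antisymm ?_ ?_
  · rintro _ ⟨x, hx, rfl⟩
    exact ⟨x, mem_closedBall_zero_iff.2 (mem_closedBall_zero_iff.1 hx), rfl⟩
  · rintro _ ⟨x, hx, rfl⟩
    refine ⟨f.linear.kerᗮ.orthogonalProjectionOnto x, ?_, ?_⟩
    · rw [mem_closedBall_zero_iff] at hx ⊢
      exact (f.linear.kerᗮ.norm_orthogonalProjectionOnto_apply_le x).trans hx
    · have hker : x - f.linear.kerᗮ.starProjection x ∈ f.linear.ker := by
        simpa only [Submodule.orthogonal_orthogonal] using
          f.linear.kerᗮ.sub_starProjection_mem_orthogonal x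
      have hf := f.linearMap_vsub x (f.linear.kerᗮ.starProjection x)
      rw [vsub_eq_sub, LinearMap.mem_ker.1 hker, eq_comm, vsub_eq_zero_iff_eq] at hf
      exact hf.symm

theorem image_ofLp_closedBall :
    WithLp.ofLp '' closedBall (0 : EuclideanSpace ℝ (Fin 2)) 1 = unitDisk2 := by
  rw [EuclideanSpace.closedBall_zero_eq 1 zero_le_one]
  ext v
  constructor
  · rintro ⟨x, hx, rfl⟩
    simpa [unitDisk2, Fin.sum_univ_two] using hx
  · intro hv
    exact ⟨WithLp.toLp 2 v, by simpa [unitDisk2, Fin.sum_univ_two] using hv, rfl⟩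

theorem isEllipticDisk_image_closedBall (f : V →ᵃ[ℝ] (Fin 3 → ℝ))
    (hf : convDim (f '' closedBall 0 1) = 2) : IsEllipticDisk (f '' closedBall 0 1) := by
  have hfinrank : Module.finrank ℝ f.linear.kerᗮ = 2 := by
    have := f.linear.ker.finrank_add_finrank_orthogonal
    have := f.linear.finrank_range_add_finrank_ker
    rw [convDim_image_closedBall] at hf
    lia
  let e : EuclideanSpace ℝ (Fin 2) ≃ₗᵢ[ℝ] f.linear.kerᗮ :=
    ((stdOrthonormalBasis ℝ f.linear.kerᗮ).reindex (finCongr hfinrank)).repr.symm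
  let g : (Fin 2 → ℝ) ≃ₗ[ℝ] f.linear.kerᗮ :=
    (WithLp.linearEquiv 2 ℝ (Fin 2 → ℝ)).symm.trans e.toLinearEquiv
  have hball : g '' unitDisk2 = closedBall 0 1 := by
    have himage : g '' unitDisk2 = e '' closedBall 0 1 := by
      rw [← image_ofLp_closedBall, Set.image_image]
      rfl
    rw [himage, e.image_closedBall, map_zero]
  have hinj : Function.Injective (f.linear.domRestrict f.linear.kerᗮ) :=
    LinearMap.injective_domRestrict_iff.2 f.linear.ker.orthogonal_disjoint.symm
  refine ⟨f.comp (f.linear.kerᗮ.subtype ∘ₗ g.toLinearMap).toAffineMap, ?_, ?_⟩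
  · rw [← AffineMap.linear_injective_iff]
    exact hinj.comp g.injective
  · rw [← image_closedBall_orthogonal_ker, ← hball, Set.image_image]
    rfl

end EllipticDisks

section DensityMatrices

variable {n : Type*} [Fintype n] {k : ℕ} (A : Fin k → Matrix n n ℂ)

/-- The measurement map `wpt A` as a real-linear map. -/
def wptₗ : Matrix n n ℂ →ₗ[ℝ] (Fin k → ℝ) where
  toFun := wpt A
  map_add' ρ σ := by
    ext i
    simp only [wpt, add_mul, trace_add, Complex.add_re, Pi.add_apply]
  map_smul' t ρ := by
    ext i
    simp only [wpt, smul_mul_assoc, trace_smul, Complex.smul_re, Pi.smul_apply, RingHom.id_apply]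

theorem convex_setOf_isDensity : Convex ℝ {ρ : Matrix n n ℂ | IsDensity ρ} := by
  rintro ρ ⟨hρ, hρ1⟩ σ ⟨hσ, hσ1⟩ a b ha hb hab
  refine ⟨(hρ.smul ha).add (hσ.smul hb), ?_⟩
  rw [trace_add, trace_smul, trace_smul, hρ1, hσ1, ← add_smul, hab, one_smul]

theorem convex_JNR : Convex ℝ (JNR A) :=
  convex_setOf_isDensity.linear_image (wptₗ A)

theorem subsingleton_JNR [Subsingleton n] : (JNR A).Subsingleton := by
  have hdensity : {ρ : Matrix n n ℂ | IsDensity ρ}.Subsingleton := by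
    rintro ρ ⟨-, hρ⟩ σ ⟨-, hσ⟩
    ext i j
    obtain rfl := Subsingleton.elim i j
    have : Unique n := uniqueOfSubsingleton i
    rw [trace, Fintype.sum_subsingleton _ i] at hρ hσ
    exact hρ.trans hσ.symm
  exact hdensity.image _

theorem convDim_JNR_of_subsingleton [Subsingleton n] : convDim (JNR A) = 0 :=
  convDim_eq_zero_iff_subsingleton.2 (subsingleton_JNR A)

open scoped MatrixOrder in
theorem mul_eq_zero_of_re_trace_mul_eq_zero {M N : Matrix n n ℂ} (hM : M.PosSemidef)
    (hN : N.PosSemidef) (h : (M * N).trace.re = 0) : N * M = 0 := by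
  classical
  obtain ⟨B, rfl⟩ := CStarAlgebra.nonneg_iff_eq_star_mul_self.1 (nonneg_iff_posSemidef.2 hM)
  obtain ⟨C, rfl⟩ := CStarAlgebra.nonneg_iff_eq_star_mul_self.1 (nonneg_iff_posSemidef.2 hN)
  simp only [star_eq_conjTranspose] at h ⊢
  have htrace : ((C * Bᴴ)ᴴ * (C * Bᴴ)).trace.re = 0 := by
    rw [conjTranspose_mul, conjTranspose_conjTranspose, Matrix.mul_assoc, trace_mul_comm,
      Matrix.mul_assoc, Matrix.mul_assoc, ← Matrix.mul_assoc, trace_mul_comm, h]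
  have hnonneg : 0 ≤ ((C * Bᴴ)ᴴ * (C * Bᴴ)).trace :=
    (posSemidef_conjTranspose_mul_self _).trace_nonneg
  have hzero : C * Bᴴ = 0 := trace_conjTranspose_mul_self_eq_zero_iff.1 <|
    Complex.ext htrace (Complex.nonneg_iff.1 hnonneg).2.symm
  calc Cᴴ * C * (Bᴴ * B) = Cᴴ * (C * Bᴴ) * B := by simp only [Matrix.mul_assoc]
    _ = 0 := by rw [hzero, Matrix.mul_zero, Matrix.zero_mul]

end DensityMatrices

section BlochBall

open Metric

theorem posSemidef_fin_two_iff {M : Matrix (Fin 2) (Fin 2) ℂ} (hM : M.IsHermitian) :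
    M.PosSemidef ↔ 0 ≤ M.trace ∧ 0 ≤ M.det := by
  refine ⟨fun h => ⟨h.trace_nonneg, h.det_nonneg⟩, fun ⟨htrace, hdet⟩ => ?_⟩
  rw [hM.trace_eq_sum_eigenvalues, Fin.sum_univ_two, ← RCLike.ofReal_add,
    RCLike.ofReal_nonneg] at htrace
  rw [hM.det_eq_prod_eigenvalues, Fin.prod_univ_two, ← RCLike.ofReal_mul,
    RCLike.ofReal_nonneg] at hdet
  rw [hM.posSemidef_iff_eigenvalues_nonneg, Pi.le_def, Fin.forall_fin_two]
  constructor <;> simp only [Pi.zero_apply] <;> by_contra! hneg <;> nlinarith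

/-- The matrix `r₁σ₁ + r₂σ₂ + r₃σ₃`, where `σ₁, σ₂, σ₃` are the Pauli matrices. -/
def pauli : EuclideanSpace ℝ (Fin 3) →ₗ[ℝ] Matrix (Fin 2) (Fin 2) ℂ where
  toFun r := !![(r 2 : ℂ), r 0 - r 1 * Complex.I; r 0 + r 1 * Complex.I, -r 2]
  map_add' r s := by
    ext i j
    fin_cases i <;> fin_cases j <;> simp <;> ring
  map_smul' t r := by
    ext i j
    fin_cases i <;> fin_cases j <;> simp <;> ring

/-- The Hermitian `2 × 2` matrix of trace one with Bloch vector `r`. -/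
def bloch : EuclideanSpace ℝ (Fin 3) →ᵃ[ℝ] Matrix (Fin 2) (Fin 2) ℂ :=
  (2⁻¹ : ℝ) • (AffineMap.const ℝ _ 1 + pauli.toAffineMap)

theorem bloch_apply (r : EuclideanSpace ℝ (Fin 3)) :
    bloch r = !![(1 + r 2 : ℂ) / 2, (r 0 - r 1 * Complex.I) / 2;
      (r 0 + r 1 * Complex.I) / 2, (1 - r 2) / 2] := by
  ext i j
  fin_cases i <;> fin_cases j <;> simp [bloch, pauli] <;> ring

theorem isHermitian_bloch (r : EuclideanSpace ℝ (Fin 3)) : (bloch r).IsHermitian := by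
  ext i j
  fin_cases i <;> fin_cases j <;> simp [bloch_apply, sub_eq_add_neg]

theorem trace_bloch (r : EuclideanSpace ℝ (Fin 3)) : (bloch r).trace = 1 := by
  rw [bloch_apply, trace_fin_two_of]
  ring

theorem det_bloch (r : EuclideanSpace ℝ (Fin 3)) :
    (bloch r).det = ((1 - ‖r‖ ^ 2) / 4 : ℝ) := by
  rw [bloch_apply, det_fin_two_of, EuclideanSpace.norm_sq_eq, Fin.sum_univ_three]
  simp only [Real.norm_eq_abs, sq_abs]
  push_cast
  linear_combination (r 1 : ℂ) ^ 2 / 4 * Complex.I_sq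

theorem isDensity_bloch_iff {r : EuclideanSpace ℝ (Fin 3)} : IsDensity (bloch r) ↔ ‖r‖ ≤ 1 := by
  rw [IsDensity, posSemidef_fin_two_iff (isHermitian_bloch r), trace_bloch, det_bloch,
    Complex.zero_le_real]
  have hsq : 0 ≤ (1 - ‖r‖ ^ 2) / 4 ↔ ‖r‖ ^ 2 ≤ 1 := by constructor <;> intro h <;> linarith
  rw [hsq, sq_le_one_iff₀ (norm_nonneg r)]
  exact ⟨fun h => h.1.2, fun h => ⟨⟨zero_le_one, h⟩, rfl⟩⟩

theorem exists_bloch_eq {σ : Matrix (Fin 2) (Fin 2) ℂ} (hσ : σ.IsHermitian) (htr : σ.trace = 1) :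
    ∃ r, bloch r = σ := by
  obtain ⟨t, ht⟩ : ∃ t : ℝ, σ 0 0 = t :=
    ⟨_, (Complex.conj_eq_iff_re.1 (hσ.apply 0 0)).symm⟩
  obtain ⟨x, y, hxy⟩ : ∃ x y : ℝ, σ 1 0 = x + y * Complex.I :=
    ⟨_, _, (Complex.re_add_im _).symm⟩
  have h01 : σ 0 1 = x - y * Complex.I := by
    rw [← hσ.apply 0 1, hxy]
    simp [sub_eq_add_neg]
  have h11 : σ 1 1 = 1 - t := by
    rw [← htr, trace_fin_two, ht]
    ring
  refine ⟨!₂[2 * x, 2 * y, 2 * t - 1], ?_⟩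
  rw [bloch_apply, eta_fin_two σ, ht, h01, hxy, h11]
  ext i j
  fin_cases i <;> fin_cases j <;> simp <;> ring

theorem image_bloch_closedBall : bloch '' closedBall 0 1 = {σ | IsDensity σ} := by
  refine Set.Subset.antisymm ?_ fun σ hσ => ?_
  · rintro _ ⟨r, hr, rfl⟩
    exact isDensity_bloch_iff.2 (mem_closedBall_zero_iff.1 hr)
  · obtain ⟨r, rfl⟩ := exists_bloch_eq hσ.1.1 hσ.2
    exact ⟨r, mem_closedBall_zero_iff.2 (isDensity_bloch_iff.1 hσ), rfl⟩

theorem isEllipticDisk_JNR_fin_two (A : Fin 3 → Matrix (Fin 2) (Fin 2) ℂ)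
    (hA : convDim (JNR A) = 2) : IsEllipticDisk (JNR A) := by
  have hJNR : JNR A = (wptₗ A).toAffineMap.comp bloch '' closedBall 0 1 := by
    rw [JNR, ← image_bloch_closedBall, Set.image_image]
    rfl
  rw [hJNR] at hA ⊢
  exact isEllipticDisk_image_closedBall _ hA

end BlochBall

section Compression

variable {n m : Type*} {k : ℕ}

/-- The matrix whose columns are the vectors `b j`. -/
def frameMatrix (b : m → EuclideanSpace ℂ n) : Matrix n m ℂ :=
  of fun a j => b j a

theorem conjTranspose_frameMatrix_mul_mul [Fintype n] [DecidableEq n]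
    (b : m → EuclideanSpace ℂ n) (M : Matrix n n ℂ) :
    (frameMatrix b)ᴴ * M * frameMatrix b =
      of fun j l => inner ℂ (b j) (M.toEuclideanLin (b l)) := by
  ext j l
  rw [Matrix.mul_assoc, of_apply, toLpLin_apply, EuclideanSpace.inner_eq_star_dotProduct,
    dotProduct_comm]
  rfl

theorem range_frameMatrix [Fintype m] [DecidableEq m] (b : m → EuclideanSpace ℂ n) :
    (frameMatrix b).toEuclideanLin.range = Submodule.span ℂ (Set.range b) := by
  refine le_antisymm ?_ (Submodule.span_le.2 ?_)
  · rintro _ ⟨x, rfl⟩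
    have hx : (frameMatrix b).toEuclideanLin x = ∑ j, x j • b j := by
      ext a
      simp [frameMatrix, toLpLin_apply, mulVec, dotProduct, mul_comm]
    rw [hx]
    exact Submodule.sum_mem _ fun j _ => Submodule.smul_mem _ _ (Submodule.subset_span ⟨j, rfl⟩)
  · rintro _ ⟨j, rfl⟩
    exact ⟨EuclideanSpace.single j 1, by ext a; simp [frameMatrix, toLpLin_apply]⟩

theorem mul_eq_of_range_toEuclideanLin_le {l : Type*} [Fintype n] [Fintype m] [DecidableEq m]
    [Fintype l] [DecidableEq l] {Q : Matrix n n ℂ} {V : Matrix n m ℂ} {ρ : Matrix n l ℂ}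
    (hQ : Q * V = V) (h : ρ.toEuclideanLin.range ≤ V.toEuclideanLin.range) : Q * ρ = ρ := by
  classical
  apply toEuclideanLin.injective
  ext1 x
  obtain ⟨y, hy⟩ := h ⟨x, rfl⟩
  rw [toLpLin_mul_same, LinearMap.comp_apply, ← hy, ← LinearMap.comp_apply,
    ← toLpLin_mul_same, hQ]

variable [Fintype n] [DecidableEq n] [Fintype m]

/-- The part of the joint numerical range coming from the density matrices supported on the
subspace `K`. It is the joint numerical range of the compressions of `A` to `K`, see
`compressedJNR_span_range`. -/
def compressedJNR (A : Fin k → Matrix n n ℂ) (K : Submodule ℂ (EuclideanSpace ℂ n)) :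
    Set (Fin k → ℝ) :=
  wpt A '' {ρ | IsDensity ρ ∧ ρ.toEuclideanLin.range ≤ K}

theorem compressedJNR_mono (A : Fin k → Matrix n n ℂ) {K L : Submodule ℂ (EuclideanSpace ℂ n)}
    (hKL : K ≤ L) : compressedJNR A K ⊆ compressedJNR A L :=
  Set.image_mono fun _ hρ => ⟨hρ.1, hρ.2.trans hKL⟩

theorem compressedJNR_top (A : Fin k → Matrix n n ℂ) : compressedJNR A ⊤ = JNR A := by
  simp [compressedJNR, JNR]

theorem compressedJNR_range [DecidableEq m] (A : Fin k → Matrix n n ℂ) {V : Matrix n m ℂ}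
    (hV : Vᴴ * V = 1) :
    compressedJNR A V.toEuclideanLin.range = JNR fun i => Vᴴ * A i * V := by
  have hwpt (σ : Matrix m m ℂ) : wpt A (V * σ * Vᴴ) = wpt (fun i => Vᴴ * A i * V) σ := by
    ext i
    simp only [wpt]
    rw [Matrix.mul_assoc V, Matrix.mul_assoc V, trace_mul_comm V]
    simp only [Matrix.mul_assoc]
  refine Set.Subset.antisymm ?_ ?_
  · rintro _ ⟨ρ, ⟨hρ, hrange⟩, rfl⟩
    have hleft : V * (Vᴴ * ρ) = ρ := by
      rw [← Matrix.mul_assoc]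
      exact mul_eq_of_range_toEuclideanLin_le (by rw [Matrix.mul_assoc, hV, Matrix.mul_one]) hrange
    have hboth : V * (Vᴴ * ρ * V) * Vᴴ = ρ := by
      have hright := congrArg conjTranspose hleft
      simp only [conjTranspose_mul, conjTranspose_conjTranspose, hρ.1.isHermitian.eq] at hright
      rw [← Matrix.mul_assoc, hleft, hright]
    refine ⟨Vᴴ * ρ * V, ⟨hρ.1.conjTranspose_mul_mul_same V, ?_⟩, ?_⟩
    · rw [trace_mul_comm, hleft, hρ.2]
    · rw [← hwpt, hboth]
  · rintro _ ⟨σ, hσ, rfl⟩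
    refine ⟨V * σ * Vᴴ, ⟨⟨hσ.1.mul_mul_conjTranspose_same V, ?_⟩, ?_⟩, hwpt σ⟩
    · rw [trace_mul_comm, ← Matrix.mul_assoc, hV, Matrix.one_mul, hσ.2]
    · rw [Matrix.mul_assoc, toLpLin_mul_same]
      exact LinearMap.range_comp_le_range _ _

theorem compressedJNR_span_range (A : Fin k → Matrix n n ℂ) {b : m → EuclideanSpace ℂ n}
    (hb : Orthonormal ℂ b) :
    compressedJNR A (Submodule.span ℂ (Set.range b)) =
      JNR fun i => of fun j l => inner ℂ (b j) ((A i).toEuclideanLin (b l)) := by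
  classical
  have hV : (frameMatrix b)ᴴ * frameMatrix b = 1 := by
    rw [← Matrix.mul_one (frameMatrix b)ᴴ, conjTranspose_frameMatrix_mul_mul]
    ext j l
    rw [of_apply, toLpLin_one, LinearMap.id_apply, orthonormal_iff_ite.1 hb, one_apply]
  simp only [← range_frameMatrix, compressedJNR_range A hV, conjTranspose_frameMatrix_mul_mul]

theorem exists_compressedJNR_eq_JNR (A : Fin k → Matrix n n ℂ)
    (K : Submodule ℂ (EuclideanSpace ℂ n)) :
    ∃ C : Fin k → Matrix (Fin (Module.finrank ℂ K)) (Fin (Module.finrank ℂ K)) ℂ,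
      compressedJNR A K = JNR C := by
  let b := stdOrthonormalBasis ℂ K
  have hspan : Submodule.span ℂ (Set.range fun j => (b j : EuclideanSpace ℂ n)) = K := by
    rw [show (fun j => (b j : EuclideanSpace ℂ n)) = K.subtype ∘ b from rfl, Set.range_comp,
      ← Submodule.map_span, ← b.coe_toBasis, b.toBasis.span_eq, Submodule.map_top,
      Submodule.range_subtype]
  have hb : Orthonormal ℂ fun j => (b j : EuclideanSpace ℂ n) :=
    b.orthonormal.comp_linearIsometry K.subtypeₗᵢ
  exact ⟨_, hspan ▸ compressedJNR_span_range A hb⟩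

theorem three_le_finrank_of_not_isEllipticDisk (A : Fin 3 → Matrix n n ℂ)
    (K : Submodule ℂ (EuclideanSpace ℂ n)) (hdim : convDim (compressedJNR A K) = 2)
    (hK : ¬IsEllipticDisk (compressedJNR A K)) : 3 ≤ Module.finrank ℂ K := by
  obtain ⟨C, hC⟩ := exists_compressedJNR_eq_JNR A K
  rw [hC] at hdim hK
  generalize Module.finrank ℂ K = r at C hC hdim hK ⊢
  by_contra! hr
  interval_cases r
  · rw [convDim_JNR_of_subsingleton C] at hdim
    lia
  · rw [convDim_JNR_of_subsingleton C] at hdim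
    lia
  · exact hK (isEllipticDisk_JNR_fin_two C hdim)

end Compression

section PureStates

variable {n : Type*} [Fintype n] {k : ℕ}
  {K L : Submodule ℂ (EuclideanSpace ℂ n)} {x : EuclideanSpace ℂ n}

/-- The rank-one matrix `x x*`. It is a density matrix (a pure state) if `x` is a unit vector. -/
def pureState (x : EuclideanSpace ℂ n) : Matrix n n ℂ :=
  vecMulVec x.ofLp (star x.ofLp)

theorem trace_pureState_mul (x : EuclideanSpace ℂ n) (M : Matrix n n ℂ) :
    (pureState x * M).trace = star x.ofLp ⬝ᵥ M *ᵥ x.ofLp := by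
  rw [pureState, trace_mul_comm, mul_vecMulVec, trace_vecMulVec, dotProduct_comm]

theorem isDensity_pureState (hx : ‖x‖ = 1) : IsDensity (pureState x) := by
  refine ⟨posSemidef_vecMulVec_self_star _, ?_⟩
  rw [pureState, trace_vecMulVec, ← EuclideanSpace.inner_eq_star_dotProduct,
    inner_self_eq_one_of_norm_eq_one hx]

theorem le_of_forall_norm_eq_one (h : ∀ x ∈ K, ‖x‖ = 1 → x ∈ L) : K ≤ L := by
  intro x hx
  rcases eq_or_ne x 0 with rfl | hx0
  · exact L.zero_mem
  · have hnorm : (‖x‖⁻¹ : ℂ) ≠ 0 := by simpa using hx0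
    exact (L.smul_mem_iff hnorm).1 (h _ (K.smul_mem _ hx) (norm_smul_inv_norm hx0))

variable [DecidableEq n]

theorem toEuclideanLin_pureState (x y : EuclideanSpace ℂ n) :
    (pureState x).toEuclideanLin y = inner ℂ x y • x := by
  ext a
  simp [pureState, toLpLin_apply, vecMulVec_mulVec, EuclideanSpace.inner_eq_star_dotProduct,
    dotProduct_comm, mul_comm]

theorem range_pureState_le_iff (hx : ‖x‖ = 1) :
    (pureState x).toEuclideanLin.range ≤ K ↔ x ∈ K := by
  constructor
  · intro h
    have hxx := h ⟨x, rfl⟩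
    rwa [toEuclideanLin_pureState, inner_self_eq_one_of_norm_eq_one hx, one_smul] at hxx
  · rintro hxK _ ⟨y, rfl⟩
    rw [toEuclideanLin_pureState]
    exact K.smul_mem _ hxK

theorem compressedJNR_nonempty (A : Fin k → Matrix n n ℂ) (hK : K ≠ ⊥) :
    (compressedJNR A K).Nonempty := by
  by_contra! hempty
  refine hK (le_bot_iff.1 (le_of_forall_norm_eq_one fun x hxK hx => ?_))
  have hmem : wpt A (pureState x) ∈ compressedJNR A K :=
    ⟨_, ⟨isDensity_pureState hx, (range_pureState_le_iff hx).2 hxK⟩, rfl⟩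
  exact (hempty ▸ hmem).elim

end PureStates

section Pencil

variable {n : Type*} [DecidableEq n] {k : ℕ} {A : Fin k → Matrix n n ℂ}
  {u : Fin k → ℝ} {c : ℝ}

/-- The matrix `u₁A₁ + ⋯ + u_kA_k - c`, which represents the functional `x ↦ u ⬝ᵥ x - c` on
density matrices. -/
def pencil (A : Fin k → Matrix n n ℂ) (u : Fin k → ℝ) (c : ℝ) : Matrix n n ℂ :=
  ∑ i, (u i : ℂ) • A i - (c : ℂ) • 1

theorem isHermitian_pencil (hA : ∀ i, (A i).IsHermitian) : (pencil A u c).IsHermitian := by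
  simp only [IsHermitian, pencil, conjTranspose_sub, conjTranspose_sum, conjTranspose_smul,
    (hA _).eq, Complex.star_def, Complex.conj_ofReal, conjTranspose_one]

variable [Fintype n]

theorem re_trace_mul_pencil {ρ : Matrix n n ℂ} (hρ : ρ.trace = 1) :
    (ρ * pencil A u c).trace.re = u ⬝ᵥ wpt A ρ - c := by
  simp [pencil, dotProduct, wpt, Matrix.mul_sub, Matrix.mul_sum, hρ]

theorem posSemidef_pencil (hA : ∀ i, (A i).IsHermitian) (hc : ∀ x ∈ JNR A, c ≤ u ⬝ᵥ x) :
    (pencil A u c).PosSemidef := by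
  have hH := isHermitian_pencil (u := u) (c := c) hA
  refine hH.posSemidef_iff_eigenvalues_nonneg.2 fun i => ?_
  have hρ := isDensity_pureState (hH.eigenvectorBasis.norm_eq_one i)
  have hre := re_trace_mul_pencil (A := A) (u := u) (c := c) hρ.2
  rw [trace_pureState_mul] at hre
  rw [hH.eigenvalues_eq, Pi.zero_apply]
  exact (sub_nonneg.2 (hc _ ⟨_, hρ, rfl⟩)).trans_eq hre.symm

theorem dotProduct_wpt_eq_iff (hA : ∀ i, (A i).IsHermitian) (hc : ∀ x ∈ JNR A, c ≤ u ⬝ᵥ x)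
    {ρ : Matrix n n ℂ} (hρ : IsDensity ρ) :
    u ⬝ᵥ wpt A ρ = c ↔ ρ.toEuclideanLin.range ≤ (pencil A u c).toEuclideanLin.ker := by
  rw [LinearMap.range_le_ker_iff, ← toLpLin_mul_same, map_eq_zero_iff _ toEuclideanLin.injective,
    ← sub_eq_zero, ← re_trace_mul_pencil hρ.2]
  refine ⟨mul_eq_zero_of_re_trace_mul_eq_zero hρ.1 (posSemidef_pencil hA hc), fun h => ?_⟩
  rw [trace_mul_comm, h, trace_zero, Complex.zero_re]

namespace IsExposedBy

variable {F : Set (Fin k → ℝ)} (hA : ∀ i, (A i).IsHermitian) (hF : IsExposedBy (JNR A) F u c)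
include hA hF

theorem eq_compressedJNR : F = compressedJNR A (pencil A u c).toEuclideanLin.ker := by
  ext x
  rw [hF.mem_iff]
  constructor
  · rintro ⟨⟨ρ, hρ, rfl⟩, hxc⟩
    exact ⟨ρ, ⟨hρ, (dotProduct_wpt_eq_iff hA hF.le hρ).1 hxc⟩, rfl⟩
  · rintro ⟨ρ, ⟨hρ, hrange⟩, rfl⟩
    exact ⟨⟨ρ, hρ, rfl⟩, (dotProduct_wpt_eq_iff hA hF.le hρ).2 hrange⟩

theorem compressedJNR_subset_iff {K : Submodule ℂ (EuclideanSpace ℂ n)} :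
    compressedJNR A K ⊆ F ↔ K ≤ (pencil A u c).toEuclideanLin.ker := by
  refine ⟨fun h => le_of_forall_norm_eq_one fun x hxK hx => ?_, fun h => ?_⟩
  · have hρ := isDensity_pureState hx
    have hmem : wpt A (pureState x) ∈ F := h ⟨_, ⟨hρ, (range_pureState_le_iff hx).2 hxK⟩, rfl⟩
    rw [← range_pureState_le_iff hx, ← dotProduct_wpt_eq_iff hA hF.le hρ]
    exact (hF.mem_iff.1 hmem).2
  · rw [hF.eq_compressedJNR hA]
    exact compressedJNR_mono A h

theorem finrank_ker_pencil_lt (hne : F ≠ JNR A) :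
    Module.finrank ℂ (pencil A u c).toEuclideanLin.ker < Fintype.card n := by
  rw [← finrank_euclideanSpace (𝕜 := ℂ) (ι := n)]
  refine Submodule.finrank_lt fun htop => hne ?_
  rw [hF.eq_compressedJNR hA, htop, compressedJNR_top]

theorem compressedJNR_inf_subset_inter {G : Set (Fin k → ℝ)} {v : Fin k → ℝ} {c' : ℝ}
    (hG : IsExposedBy (JNR A) G v c') :
    compressedJNR A ((pencil A u c).toEuclideanLin.ker ⊓ (pencil A v c').toEuclideanLin.ker) ⊆
      F ∩ G :=
  Set.subset_inter ((hF.compressedJNR_subset_iff hA).2 inf_le_left)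
    ((hG.compressedJNR_subset_iff hA).2 inf_le_right)

theorem eq_of_subset_of_finrank_eq {G : Set (Fin k → ℝ)} {v : Fin k → ℝ} {c' : ℝ}
    (hG : IsExposedBy (JNR A) G v c')
    (hrank : Module.finrank ℂ (pencil A u c).toEuclideanLin.ker =
      Module.finrank ℂ (pencil A v c').toEuclideanLin.ker) (hFG : F ⊆ G) : F = G := by
  rw [hF.eq_compressedJNR hA, hG.compressedJNR_subset_iff hA] at hFG
  rw [hF.eq_compressedJNR hA, hG.eq_compressedJNR hA,
    Submodule.eq_of_le_of_finrank_eq hFG hrank]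

end IsExposedBy

end Pencil

section ScalarBlock

variable {m l : Type*}

theorem posSemidef_fromBlocks_zero [Finite m] [Finite l] {M : Matrix m m ℂ} (hM : M.PosSemidef) :
    (fromBlocks M 0 0 (0 : Matrix l l ℂ)).PosSemidef := by
  classical
  have := Fintype.ofFinite m
  have := Fintype.ofFinite l
  have h := hM.mul_mul_conjTranspose_same (fromRows (1 : Matrix m m ℂ) (0 : Matrix l m ℂ))
  rwa [fromRows_mul, conjTranspose_fromRows_eq_fromCols_conjTranspose, fromRows_mul_fromCols,
    conjTranspose_one, conjTranspose_zero, Matrix.one_mul, Matrix.zero_mul, Matrix.mul_one,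
    Matrix.mul_zero, Matrix.zero_mul, Matrix.zero_mul] at h

variable [Fintype m] [Fintype l]

theorem trace_fromBlocks {R : Type*} [AddCommMonoid R] (M₁₁ : Matrix m m R) (M₁₂ : Matrix m l R)
    (M₂₁ : Matrix l m R) (M₂₂ : Matrix l l R) :
    (fromBlocks M₁₁ M₁₂ M₂₁ M₂₂).trace = M₁₁.trace + M₂₂.trace :=
  Fintype.sum_sum_type _

variable [DecidableEq l] {k : ℕ}

-- The scalar block only contributes the point `wpt C τ`, which already lies in `JNR C`.
theorem JNR_fromBlocks_trace_smul_one (C : Fin k → Matrix m m ℂ) {τ : Matrix m m ℂ}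
    (hτ : IsDensity τ) :
    JNR (fun i => fromBlocks (C i) 0 0 ((τ * C i).trace • (1 : Matrix l l ℂ))) = JNR C := by
  refine Set.Subset.antisymm ?_ ?_
  · rintro _ ⟨ρ, ⟨hρ, htr⟩, rfl⟩
    have htr₂ : 0 ≤ ρ.toBlocks₂₂.trace := (hρ.submatrix Sum.inr).trace_nonneg
    refine ⟨ρ.toBlocks₁₁ + ρ.toBlocks₂₂.trace • τ,
      ⟨(hρ.submatrix Sum.inl).add (hτ.1.smul htr₂), ?_⟩, ?_⟩
    · rw [trace_add, trace_smul, hτ.2, smul_eq_mul, mul_one, ← htr, ← fromBlocks_toBlocks ρ,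
        trace_fromBlocks, toBlocks_fromBlocks₁₁, toBlocks_fromBlocks₂₂]
    · ext i
      rw [wpt, wpt, ← fromBlocks_toBlocks ρ]
      simp only [fromBlocks_multiply, trace_fromBlocks, toBlocks_fromBlocks₁₁,
        toBlocks_fromBlocks₂₂, Matrix.mul_zero, Matrix.mul_smul, Matrix.mul_one, Matrix.add_mul,
        Matrix.smul_mul, trace_add, trace_smul, smul_eq_mul, add_zero, zero_add]
      rw [mul_comm (τ * C i).trace]
  · rintro _ ⟨σ, ⟨hσ, htr⟩, rfl⟩
    refine ⟨fromBlocks σ 0 0 0, ⟨?_, ?_⟩, ?_⟩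
    · exact posSemidef_fromBlocks_zero hσ
    · rw [trace_fromBlocks, trace_zero, add_zero, htr]
    · ext i
      simp [wpt, fromBlocks_multiply, trace_fromBlocks]

end ScalarBlock

section SubspaceVectors

variable {V W : Type*} [NormedAddCommGroup V] [InnerProductSpace ℂ V] [AddCommGroup W]
  [Module ℂ W] {K L : Submodule ℂ V}

theorem exists_norm_eq_one_mem_ker [FiniteDimensional ℂ L] {φ : V →ₗ[ℂ] W}
    (h : Module.finrank ℂ (L.map φ) < Module.finrank ℂ L) : ∃ x ∈ L, ‖x‖ = 1 ∧ φ x = 0 := by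
  have hker : (φ.domRestrict L).ker ≠ ⊥ := by
    intro hbot
    have hsum := (φ.domRestrict L).finrank_range_add_finrank_ker
    rw [hbot, finrank_bot, add_zero, LinearMap.range_domRestrict] at hsum
    exact h.ne hsum
  obtain ⟨x, hx, hx0⟩ := Submodule.exists_mem_ne_zero_of_ne_bot hker
  refine ⟨(‖x‖⁻¹ : ℂ) • (x : V), L.smul_mem _ x.2,
    norm_smul_inv_norm (by simpa using hx0), ?_⟩
  rw [map_smul, show φ x = 0 from hx, smul_zero]

theorem exists_norm_eq_one_mem_orthogonal [FiniteDimensional ℂ K] [FiniteDimensional ℂ L]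
    (h : Module.finrank ℂ L < Module.finrank ℂ K) : ∃ x ∈ K, ‖x‖ = 1 ∧ x ∈ Lᗮ := by
  obtain ⟨x, hxK, hx, hx0⟩ := exists_norm_eq_one_mem_ker (L := K)
    (φ := L.orthogonalProjectionOnto.toLinearMap) ((Submodule.finrank_le _).trans_lt h)
  exact ⟨x, hxK, hx, L.orthogonalProjectionOnto_eq_zero_iff.1 hx0⟩

theorem inner_map_eq_zero_of_forall_norm_eq_one {T : V →ₗ[ℂ] V}
    (h : ∀ x ∈ L, ‖x‖ = 1 → inner ℂ x (T x) = 0) {x y : V} (hx : x ∈ L) (hy : y ∈ L) :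
    inner ℂ x (T y) = 0 := by
  have hself {z : V} (hz : z ∈ L) : inner ℂ (T z) z = 0 := by
    rcases eq_or_ne z 0 with rfl | hz0
    · exact inner_zero_right _
    · have hunit := h _ (L.smul_mem (‖z‖⁻¹ : ℂ) hz) (norm_smul_inv_norm hz0)
      rw [inner_eq_zero_symm]
      simpa [inner_smul_left, inner_smul_right, hz0] using hunit
  have hI := L.smul_mem Complex.I hy
  rw [inner_eq_zero_symm, inner_map_polarization T x y, hself (L.add_mem hx hy),
    hself (L.sub_mem hx hy), hself (L.add_mem hx hI), hself (L.sub_mem hx hI)]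
  simp

theorem orthonormal_sumElim_const {ι : Type*} {b : ι → V} {y : V} (hb : Orthonormal ℂ b)
    (hy : ‖y‖ = 1) (hby : ∀ j, inner ℂ (b j) y = 0) :
    Orthonormal ℂ (Sum.elim b fun _ : Unit => y) := by
  refine ⟨by rintro (j | _); exacts [hb.1 j, hy], ?_⟩
  rintro (j | _) (l | _) hjl
  · exact hb.2 fun h => hjl (congrArg Sum.inl h)
  · exact hby j
  · exact inner_eq_zero_symm.1 (hby l)
  · exact absurd rfl hjl

end SubspaceVectors

theorem finrank_ker_mulVecLin_map_ofReal {m n : Type*} [Fintype m] [Fintype n] {B : Matrix m n ℝ}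
    (hB : LinearIndependent ℝ B.row) :
    Module.finrank ℂ (B.map Complex.ofReal).mulVecLin.ker + Fintype.card m = Fintype.card n := by
  have hrank : (B.map Complex.ofReal).rank = Fintype.card m :=
    LinearIndependent.rank_matrix <|
      (linearIndependent_algebraMap_comp_iff (S := ℂ) (v := B.row)).2 hB
  have hsum := (B.map Complex.ofReal).mulVecLin.finrank_range_add_finrank_ker
  rw [← Matrix.rank, hrank, Module.finrank_fintype_fun_eq_card] at hsum
  lia

section CommonKernel

variable {n : Type*} [Fintype n] [DecidableEq n] {k : ℕ} {A : Fin k → Matrix n n ℂ}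
  {K L : Submodule ℂ (EuclideanSpace ℂ n)}

theorem compressedJNR_span_sumElim_of_decoupled {m : Type*} [Finite m]
    (hA : ∀ i, (A i).IsHermitian) {b : m → EuclideanSpace ℂ n} {y : EuclideanSpace ℂ n}
    (hb : Orthonormal ℂ (Sum.elim b fun _ : Unit => y))
    (hby : ∀ i j, inner ℂ (b j) ((A i).toEuclideanLin y) = 0) (j₀ : m)
    (hj₀ : ∀ i, inner ℂ y ((A i).toEuclideanLin y) =
      inner ℂ (b j₀) ((A i).toEuclideanLin (b j₀))) :
    compressedJNR A (Submodule.span ℂ (Set.range (Sum.elim b fun _ : Unit => y))) =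
      compressedJNR A (Submodule.span ℂ (Set.range b)) := by
  classical
  have := Fintype.ofFinite m
  have hτ : IsDensity (pureState (EuclideanSpace.single j₀ (1 : ℂ))) :=
    isDensity_pureState (by simp)
  have hyb (i : Fin k) (j : m) : inner ℂ y ((A i).toEuclideanLin (b j)) = 0 := by
    rw [← isSymmetric_toEuclideanLin_iff.2 (hA i), inner_eq_zero_symm, hby]
  have hb₁ : Orthonormal ℂ b := hb.comp Sum.inl Sum.inl_injective
  rw [compressedJNR_span_range A hb, compressedJNR_span_range A hb₁,
    ← JNR_fromBlocks_trace_smul_one (l := Unit) _ hτ]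
  congr 1
  ext i (j | j) (l | l)
  · rfl
  · exact hby i j
  · exact hyb i l
  · simp [trace_pureState_mul, hj₀]

theorem inner_toEuclideanLin_eq_of_compressedJNR_subset_singleton (hA : ∀ i, (A i).IsHermitian)
    {p : Fin k → ℝ} (hL : compressedJNR A L ⊆ {p}) (i : Fin k) {x y : EuclideanSpace ℂ n}
    (hx : x ∈ L) (hy : y ∈ L) : inner ℂ x ((A i).toEuclideanLin y) = p i * inner ℂ x y := by
  let T : EuclideanSpace ℂ n →ₗ[ℂ] EuclideanSpace ℂ n := (A i).toEuclideanLin - (p i : ℂ) • 1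
  have hT (z w : EuclideanSpace ℂ n) :
      inner ℂ z (T w) = inner ℂ z ((A i).toEuclideanLin w) - p i * inner ℂ z w := by
    simp only [T, LinearMap.sub_apply, LinearMap.smul_apply, Module.End.one_apply,
      inner_sub_right, inner_smul_right]
  rw [← sub_eq_zero, ← hT]
  refine inner_map_eq_zero_of_forall_norm_eq_one (fun z hzL hz => ?_) hx hy
  have hp : wpt A (pureState z) = p :=
    hL ⟨_, ⟨isDensity_pureState hz, (range_pureState_le_iff hz).2 hzL⟩, rfl⟩
  have hre : (inner ℂ z ((A i).toEuclideanLin z)).re = p i := by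
    rw [← hp, wpt, trace_pureState_mul, EuclideanSpace.inner_eq_star_dotProduct, dotProduct_comm]
    rfl
  have him : (inner ℂ z ((A i).toEuclideanLin z)).im = 0 :=
    (isSymmetric_toEuclideanLin_iff.2 (hA i)).im_inner_self_apply z
  rw [hT, inner_self_eq_one_of_norm_eq_one hz, mul_one, sub_eq_zero]
  exact Complex.ext hre him

theorem sum_mul_inner_toEuclideanLin_eq_zero {u : Fin k → ℝ} {c : ℝ} {x e : EuclideanSpace ℂ n}
    (hx : x ∈ (pencil A u c).toEuclideanLin.ker) (hex : inner ℂ e x = 0) :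
    ∑ i, (u i : ℂ) * inner ℂ e ((A i).toEuclideanLin x) = 0 := by
  have h : inner ℂ e ((pencil A u c).toEuclideanLin x) = 0 := by
    rw [LinearMap.mem_ker.1 hx, inner_zero_right]
  simpa only [pencil, map_sub, map_sum, map_smul, toLpLin_one, LinearMap.sub_apply,
    LinearMap.sum_apply, LinearMap.smul_apply, LinearMap.id_apply, inner_sub_right, inner_sum,
    inner_smul_right, hex, mul_zero, sub_zero] using h

theorem exists_norm_eq_one_forall_inner_toEuclideanLin_eq_zero {m : Type*} [Fintype m]
    {B : Matrix m (Fin k) ℝ} (hB : LinearIndependent ℝ B.row) {c : m → ℝ}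
    (hL : ∀ j, L ≤ (pencil A (B j) (c j)).toEuclideanLin.ker)
    (hk : k < Module.finrank ℂ L + Fintype.card m) {e : EuclideanSpace ℂ n} (he : e ∈ Lᗮ) :
    ∃ x ∈ L, ‖x‖ = 1 ∧ ∀ i, inner ℂ e ((A i).toEuclideanLin x) = 0 := by
  let φ : EuclideanSpace ℂ n →ₗ[ℂ] (Fin k → ℂ) :=
    LinearMap.pi fun i => innerₛₗ ℂ e ∘ₗ (A i).toEuclideanLin
  have hφ : L.map φ ≤ (B.map Complex.ofReal).mulVecLin.ker := by
    rintro _ ⟨x, hx, rfl⟩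
    ext j
    exact sum_mul_inner_toEuclideanLin_eq_zero (hL j hx) (L.inner_left_of_mem_orthogonal hx he)
  have hfinrank := finrank_ker_mulVecLin_map_ofReal hB
  rw [Fintype.card_fin] at hfinrank
  have hlt : Module.finrank ℂ (B.map Complex.ofReal).mulVecLin.ker < Module.finrank ℂ L :=
    lt_of_add_lt_add_right (hfinrank.trans_lt hk)
  obtain ⟨x, hxL, hx, hx0⟩ := exists_norm_eq_one_mem_ker (φ := φ) (L := L)
    ((Submodule.finrank_mono hφ).trans_lt hlt)
  exact ⟨x, hxL, hx, congrFun hx0⟩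

end CommonKernel

section RankThree

variable {n : Type*} [Fintype n] [DecidableEq n] {A : Fin 3 → Matrix n n ℂ}
  {K L : Submodule ℂ (EuclideanSpace ℂ n)}

theorem exists_compressedJNR_eq_of_compressedJNR_subset_singleton (hA : ∀ i, (A i).IsHermitian)
    {p : Fin 3 → ℝ} (hL : compressedJNR A L ⊆ {p}) (hL₂ : Module.finrank ℂ L = 2)
    (hLK : L ≤ K) (hK₃ : Module.finrank ℂ K = 3)
    {B : Matrix (Fin 2) (Fin 3) ℝ} (hB : LinearIndependent ℝ B.row) {c : Fin 2 → ℝ}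
    (hLker : ∀ j, L ≤ (pencil A (B j) (c j)).toEuclideanLin.ker) :
    ∃ M : Submodule ℂ (EuclideanSpace ℂ n),
      Module.finrank ℂ M = 2 ∧ compressedJNR A K = compressedJNR A M := by
  have hAL := inner_toEuclideanLin_eq_of_compressedJNR_subset_singleton hA hL
  obtain ⟨e, heK, he, heL⟩ := exists_norm_eq_one_mem_orthogonal (K := K) (L := L)
    (by rw [hL₂, hK₃]; norm_num)
  obtain ⟨y, hyL, hy, hey⟩ := exists_norm_eq_one_forall_inner_toEuclideanLin_eq_zero hB hLker
    (by rw [hL₂, Fintype.card_fin]; norm_num) heL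
  obtain ⟨x, hxL, hx, hxy⟩ := exists_norm_eq_one_mem_orthogonal (K := L) (L := ℂ ∙ y)
    (by rw [hL₂, finrank_span_singleton (norm_ne_zero_iff.1 (hy ▸ one_ne_zero))]; norm_num)
  rw [Submodule.mem_orthogonal_singleton_iff_inner_left] at hxy
  have hxe : Orthonormal ℂ ![x, e] := by
    simp [orthonormal_vecCons_iff, hx, he, L.inner_right_of_mem_orthogonal hxL heL]
  have hxey : Orthonormal ℂ (Sum.elim ![x, e] fun _ : Unit => y) :=
    orthonormal_sumElim_const hxe hy <|
      Fin.forall_fin_two.2 ⟨hxy, L.inner_left_of_mem_orthogonal hyL heL⟩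
  have hspan : Submodule.span ℂ (Set.range (Sum.elim ![x, e] fun _ : Unit => y)) = K := by
    refine Submodule.eq_of_le_of_finrank_eq (Submodule.span_le.2 ?_) ?_
    · rw [Set.range_subset_iff, Sum.forall, Fin.forall_fin_two]
      exact ⟨⟨hLK hxL, heK⟩, fun _ => hLK hyL⟩
    · exact (finrank_span_eq_card hxey.linearIndependent).trans hK₃.symm
  refine ⟨Submodule.span ℂ (Set.range ![x, e]), finrank_span_eq_card hxe.linearIndependent, ?_⟩
  rw [← hspan]
  refine compressedJNR_span_sumElim_of_decoupled hA hxey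
    (fun i => Fin.forall_fin_two.2 ⟨?_, hey i⟩) 0 fun i => ?_
  · exact (hAL i hxL hyL).trans (by rw [hxy, mul_zero])
  · refine (hAL i hyL hyL).trans (Eq.trans ?_ (hAL i hxL hxL).symm)
    rw [inner_self_eq_one_of_norm_eq_one hx, inner_self_eq_one_of_norm_eq_one hy]

theorem IsExposedBy.not_subsingleton_inter (hA : ∀ i, (A i).IsHermitian)
    {F G : Set (Fin 3 → ℝ)} {u v : Fin 3 → ℝ} {c c' : ℝ}
    (hu : IsExposedBy (JNR A) F u c) (hv : IsExposedBy (JNR A) G v c')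
    (hK : Module.finrank ℂ (pencil A u c).toEuclideanLin.ker = 3)
    (hL : Module.finrank ℂ ((pencil A u c).toEuclideanLin.ker ⊓
      (pencil A v c').toEuclideanLin.ker : Submodule ℂ (EuclideanSpace ℂ n)) = 2)
    (hFG : ¬F ⊆ G) (hGF : ¬G ⊆ F) (hF₂ : convDim F = 2) (hF : ¬IsEllipticDisk F) :
    ¬(F ∩ G).Subsingleton := by
  intro hsub
  have hinter := hu.compressedJNR_inf_subset_inter hA hv
  obtain ⟨p, hp⟩ : (F ∩ G).Nonempty := (compressedJNR_nonempty A
    (Submodule.one_le_finrank_iff.1 (hL ▸ one_le_two))).mono hinter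
  obtain ⟨M, hM, heq⟩ := exists_compressedJNR_eq_of_compressedJNR_subset_singleton hA
    (hinter.trans fun x hx => hsub hx hp) hL inf_le_left hK (B := of ![u, v]) (c := ![c, c'])
    (hu.linearIndependent_pair hv ⟨p, hp⟩ hFG hGF)
    (Fin.forall_fin_two.2 ⟨inf_le_left, inf_le_right⟩)
  rw [hu.eq_compressedJNR hA, heq] at hF₂ hF
  have := three_le_finrank_of_not_isEllipticDisk A M hF₂ hF
  lia

end RankThree

theorem finrank_inf_of_ne {𝕜 V : Type*} [DivisionRing 𝕜] [AddCommGroup V] [Module 𝕜 V]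
    [FiniteDimensional 𝕜 V] {r : ℕ} (hV : Module.finrank 𝕜 V = r + 2) {K L : Submodule 𝕜 V}
    (hK : Module.finrank 𝕜 K = r + 1) (hL : Module.finrank 𝕜 L = r + 1) (hKL : K ≠ L) :
    Module.finrank 𝕜 (K ⊓ L : Submodule 𝕜 V) = r := by
  have hsum := Submodule.finrank_sup_add_finrank_inf_eq K L
  have hsup : Module.finrank 𝕜 (K ⊔ L : Submodule 𝕜 V) ≤ r + 2 := hV ▸ Submodule.finrank_le _
  have hinf : Module.finrank 𝕜 (K ⊓ L : Submodule 𝕜 V) < r + 1 := by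
    rw [← hK]
    refine Submodule.finrank_lt_finrank_of_lt (inf_le_left.lt_of_ne fun h => hKL ?_)
    exact Submodule.eq_of_le_of_finrank_eq (inf_eq_left.1 h) (hK.trans hL.symm)
  rw [hK, hL] at hsum
  lia

theorem range_toEuclideanLin_le_iff_mul_mul_eq {n : Type*} [Fintype n] [DecidableEq n]
    {P ρ : Matrix n n ℂ} (hP : Pᴴ = P) (hPP : P * P = P) (hρ : ρ.IsHermitian) :
    ρ.toEuclideanLin.range ≤ P.toEuclideanLin.range ↔ P * ρ * P = ρ := by
  constructor
  · intro h
    have hleft : P * ρ = ρ := mul_eq_of_range_toEuclideanLin_le hPP h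
    have hright := congrArg conjTranspose hleft
    rw [conjTranspose_mul, hP, hρ.eq] at hright
    rw [hleft, hright]
  · intro h
    rw [← h, Matrix.mul_assoc, toLpLin_mul_same]
    exact LinearMap.range_comp_le_range _ _

theorem IsNonEllipticFace.exists_isExposedBy {A : Fin 3 → Matrix (Fin 4) (Fin 4) ℂ}
    {F : Set (Fin 3 → ℝ)} (hA : ∀ i, (A i).IsHermitian)
    (hdim : convDim (JNR A) = 3) (hF : IsNonEllipticFace (JNR A) F) :
    ∃ u c, IsExposedBy (JNR A) F u c ∧
      Module.finrank ℂ (pencil A u c).toEuclideanLin.ker = 3 := by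
  obtain ⟨hface, hF₂, hell⟩ := hF
  have hne : F.Nonempty := by
    rw [Set.nonempty_iff_ne_empty]
    rintro rfl
    rw [convDim_eq_zero_iff_subsingleton.2 Set.subsingleton_empty] at hF₂
    lia
  obtain ⟨u, c, hu⟩ := hface.exists_isExposedBy_of_convDim_add_one (convex_JNR A) hdim hne
    (congrArg (· + 1) hF₂)
  have heq := hu.eq_compressedJNR hA
  refine ⟨u, c, hu, (three_le_finrank_of_not_isEllipticDisk A _ (heq ▸ hF₂) (heq ▸ hell)).antisymm'
    (Nat.le_of_lt_succ (hu.finrank_ker_pencil_lt hA ?_))⟩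
  rintro rfl
  lia

section RankThreeFaces

variable {k : ℕ} {A : Fin k → Matrix (Fin 4) (Fin 4) ℂ} {G : Set (Fin k → ℝ)}

theorem IsRank3Face.exists_eq_compressedJNR (hG : IsRank3Face A G) :
    ∃ K : Submodule ℂ (EuclideanSpace ℂ (Fin 4)),
      Module.finrank ℂ K = 3 ∧ G = compressedJNR A K ∧
        ∀ ρ, IsDensity ρ → (wpt A ρ ∈ G ↔ ρ.toEuclideanLin.range ≤ K) := by
  obtain ⟨-, hface, P, hP, hPP, hrank, hmem⟩ := hG
  have hmem' (ρ) (hρ : IsDensity ρ) :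
      wpt A ρ ∈ G ↔ ρ.toEuclideanLin.range ≤ P.toEuclideanLin.range :=
    (hmem ρ hρ).trans (range_toEuclideanLin_le_iff_mul_mul_eq hP hPP hρ.1.isHermitian).symm
  refine ⟨P.toEuclideanLin.range, ?_, ?_, hmem'⟩
  · rw [← hrank, rank_eq_finrank_range_toLin P (EuclideanSpace.basisFun _ ℂ).toBasis
      (EuclideanSpace.basisFun _ ℂ).toBasis, toEuclideanLin_eq_toLin_orthonormal]
  · ext x
    constructor
    · intro hx
      obtain ⟨ρ, hρ, rfl⟩ := hface.2.subset hx
      exact ⟨ρ, ⟨hρ, (hmem' ρ hρ).1 hx⟩, rfl⟩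
    · rintro ⟨ρ, ⟨hρ, hrange⟩, rfl⟩
      exact (hmem' ρ hρ).2 hrange

theorem IsRank3Face.ne_JNR (hG : IsRank3Face A G) : G ≠ JNR A := by
  obtain ⟨K, hK, -, hmem⟩ := hG.exists_eq_compressedJNR
  rintro rfl
  have htop : K = ⊤ := top_le_iff.1 <| le_of_forall_norm_eq_one fun x _ hx =>
    (range_pureState_le_iff hx).1
      ((hmem _ (isDensity_pureState hx)).1 ⟨_, isDensity_pureState hx, rfl⟩)
  rw [htop, finrank_top, finrank_euclideanSpace, Fintype.card_fin] at hK
  lia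

theorem IsRank3Face.exists_isExposedBy (hA : ∀ i, (A i).IsHermitian)
    (hdim : convDim (JNR A) = k) (hG : IsRank3Face A G) :
    ∃ v c, IsExposedBy (JNR A) G v c ∧
      Module.finrank ℂ (pencil A v c).toEuclideanLin.ker = 3 := by
  obtain ⟨K, hK, hGK, -⟩ := hG.exists_eq_compressedJNR
  obtain ⟨v, c, E, hE, hGE, hEne⟩ :=
    exists_isExposedBy_of_isFaceOf (convex_JNR A) hdim hG.2.1 hG.1 hG.ne_JNR
  have hlt := hE.finrank_ker_pencil_lt hA hEne
  have hker : K = (pencil A v c).toEuclideanLin.ker :=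
    Submodule.eq_of_le_of_finrank_le ((hE.compressedJNR_subset_iff hA).1 (hGK ▸ hGE))
      ((Nat.le_of_lt_succ hlt).trans_eq hK.symm)
  have hGeq : G = E := by rw [hGK, hker, ← hE.eq_compressedJNR hA]
  exact ⟨v, c, hGeq ▸ hE, hker ▸ hK⟩

end RankThreeFaces

/-- If a rank-3 face differs from a non-elliptic face, both are
two-dimensional and their intersection is a one-dimensional face of each of
them and an exposed face of `W`. -/
theorem stmt1 (A : Fin 3 → Matrix (Fin 4) (Fin 4) ℂ)
    (hA : ∀ i, (A i).IsHermitian)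
    (hdim : convDim (JNR A) = 3)
    (F G : Set (Fin 3 → ℝ))
    (hF : IsNonEllipticFace (JNR A) F)
    (hG : IsRank3Face A G) (hFG : F ≠ G) :
    convDim G = 2 ∧
      IsFaceOf F (F ∩ G) ∧ IsFaceOf G (F ∩ G) ∧ convDim (F ∩ G) = 1 ∧
      IsExposedFace (JNR A) (F ∩ G) := by
  obtain ⟨u, c, hu, hK⟩ := hF.exists_isExposedBy hA hdim
  obtain ⟨v, c', hv, hL⟩ := hG.exists_isExposedBy hA hdim
  have hF_not : ¬F ⊆ G := mt (hu.eq_of_subset_of_finrank_eq hA hv (hK.trans hL.symm)) hFG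
  have hG_not : ¬G ⊆ F := mt (hv.eq_of_subset_of_finrank_eq hA hu (hL.trans hK.symm)) hFG.symm
  have hKL := finrank_inf_of_ne finrank_euclideanSpace_fin hK hL
    fun h => hFG (by rw [hu.eq_compressedJNR hA, h, ← hv.eq_compressedJNR hA])
  have hsub : ¬(F ∩ G).Subsingleton :=
    hu.not_subsingleton_inter hA hv hK hKL hF_not hG_not hF.2.1 hF.2.2
  have hne : (F ∩ G).Nonempty := (Set.not_subsingleton_iff.1 hsub).nonempty
  have hpos : convDim (F ∩ G) ≠ 0 := mt convDim_eq_zero_iff_subsingleton.1 hsub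
  have hface : IsFaceOf (JNR A) (F ∩ G) := hF.1.inter hG.2.1
  have hfaceF : IsFaceOf F (F ∩ G) := hface.mono Set.inter_subset_left hu.subset
  have hfaceG : IsFaceOf G (F ∩ G) := hface.mono Set.inter_subset_right hv.subset
  have hltF : convDim (F ∩ G) < 2 :=
    (hfaceF.convDim_lt hne (mt Set.inter_eq_left.1 hF_not)).trans_eq hF.2.1
  have hltG : convDim (F ∩ G) < convDim G :=
    hfaceG.convDim_lt hne (mt Set.inter_eq_right.1 hG_not)
  have hltW : convDim G < 3 := (hG.2.1.convDim_lt hG.1 hG.ne_JNR).trans_eq hdim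
  exact ⟨by lia, hfaceF, hfaceG, by lia, (hu.inter hv).isExposedFace hne⟩
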